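/- arXiv:0912.0904 — 2 statements merged into one kernel-verified Lean document; each statement's English description precedes it below -/
import Mathlib

section
/- For every ε with 0 < ε < 1 there exist a smooth (time-independent) function H : ℂ → ℝ and a map b : ℝ → ℂ → ℂ with b 0 = id such that: (i) for every z ∈ ℂ and t ∈ ℝ, the curve s ↦ b s z has derivative Complex.I * ∇H (b t z) at time t (i.e. b is the Hamiltonian flow of H); (ii) for every t ∈ ℝ, b t z = z whenever π|z|² ≥ 1 + ε (so each b t is the identity outside the open disc {z : π|z|² < 1 + ε}); and (iii) for every t > 1, the image under b t of the closed disc {z : π|z|² ≤ 1} is contained in the slit disc {z : π|z|² < 1 + ε} \ {z : Im z = 0 and Re z ≥ 0}. -/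
open Real

/-! Multiply `Im`, whose Hamiltonian vector field is the constant `-1`, by a cutoff `χ` equal to
`1` on the small disc. The real axis is invariant under the resulting flow, which there moves
leftwards with speed `χ`. So an orbit which starts in the small disc and is found on the
nonnegative real axis has moved with unit speed inside that disc until then, and this can last no
longer than the radius of the disc. -/

open Set Metric
open scoped ContDiff Gradient Manifold NNReal

section IntegralCurve

variable {E : Type*} [NormedAddCommGroup E] [NormedSpace ℝ E] {v : E → E} {γ γ' : ℝ → E} {t₀ : ℝ}

lemma isMIntegralCurveOn_iff_isIntegralCurveOn {s : Set ℝ} :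
    IsMIntegralCurveOn (I := 𝓘(ℝ, E)) γ v s ↔ IsIntegralCurveOn γ (fun _ ↦ v) s :=
  forall₂_congr fun _ _ ↦ hasMFDerivWithinAt_iff_hasFDerivWithinAt

lemma isMIntegralCurve_iff_isIntegralCurve :
    IsMIntegralCurve (I := 𝓘(ℝ, E)) γ v ↔ IsIntegralCurve γ fun _ ↦ v :=
  forall_congr' fun _ ↦ hasMFDerivAt_iff_hasFDerivAt

lemma isIntegralCurve_eq_of_contDiff (hv : ContDiff ℝ 1 v) (hγ : IsIntegralCurve γ fun _ ↦ v)
    (hγ' : IsIntegralCurve γ' fun _ ↦ v) (h : γ t₀ = γ' t₀) : γ = γ' :=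
  isMIntegralCurve_Ioo_eq_of_contMDiff_boundaryless (contMDiff_vectorSpace_iff_contDiff.2 hv)
    (isMIntegralCurve_iff_isIntegralCurve.2 hγ) (isMIntegralCurve_iff_isIntegralCurve.2 hγ') h

lemma isIntegralCurve_apply_eq_of_eq_zero (hv : ContDiff ℝ 1 v)
    (hγ : IsIntegralCurve γ fun _ ↦ v) (h : v (γ t₀) = 0) (t : ℝ) : γ t = γ t₀ :=
  congrFun (isIntegralCurve_eq_of_contDiff hv hγ (isIntegralCurve_const fun _ ↦ h) rfl) t

variable [CompleteSpace E]

lemma exists_isIntegralCurveOn_Ioo_of_lipschitzWith {K L : ℝ≥0} (hK : LipschitzWith K v)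
    (hL : ∀ x, ‖v x‖ ≤ L) (x : E) (a : ℝ) :
    ∃ γ : ℝ → E, γ 0 = x ∧ IsIntegralCurveOn γ (fun _ ↦ v) (Ioo (-a) a) := by
  rcases le_or_gt a 0 with ha | ha
  · exact ⟨fun _ ↦ x, rfl, by simp [Ioo_eq_empty (by linarith : ¬-a < a), IsIntegralCurveOn]⟩
  · have hv : IsPicardLindelof (fun _ ↦ v) (tmin := -a) (tmax := a)
        ⟨0, by constructor <;> linarith⟩ x (L * ⟨a, ha.le⟩) 0 L K :=
      .of_time_independent (fun y _ ↦ hL y) hK.lipschitzOnWith (by simpa using! le_rfl)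
    obtain ⟨γ, hγ₀, hγ⟩ := hv.exists_eq_forall_mem_Icc_hasDerivWithinAt₀
    exact ⟨γ, hγ₀, IsIntegralCurveOn.mono hγ Ioo_subset_Icc_self⟩

lemma exists_isIntegralCurve_of_hasCompactSupport (hv : ContDiff ℝ 1 v)
    (hc : HasCompactSupport v) (t₀ : ℝ) (x : E) :
    ∃ γ : ℝ → E, γ t₀ = x ∧ IsIntegralCurve γ fun _ ↦ v := by
  obtain ⟨K, hK⟩ := hv.lipschitzWith_of_hasCompactSupport hc one_ne_zero
  obtain ⟨L, hL⟩ := hc.exists_bound_of_continuous hv.continuous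
  obtain ⟨γ, hγ₀, hγ⟩ := (exists_isMIntegralCurve_iff_exists_isMIntegralCurveOn_Ioo
    (I := 𝓘(ℝ, E)) (contMDiff_vectorSpace_iff_contDiff.2 hv) x).2 fun a ↦ by
      simpa only [isMIntegralCurveOn_iff_isIntegralCurveOn] using
        exists_isIntegralCurveOn_Ioo_of_lipschitzWith hK
          (fun y ↦ (hL y).trans L.le_coe_toNNReal) x a
  exact ⟨γ ∘ (· - t₀), by simpa using hγ₀,
    (isMIntegralCurve_iff_isIntegralCurve.1 hγ).comp_sub t₀⟩

lemma exists_flow_of_hasCompactSupport (hv : ContDiff ℝ 1 v) (hc : HasCompactSupport v) :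
    ∃ b : ℝ → E → E, b 0 = id ∧ ∀ x, IsIntegralCurve (b · x) fun _ ↦ v := by
  choose γ hγ₀ hγ using exists_isIntegralCurve_of_hasCompactSupport hv hc 0
  exact ⟨fun t x ↦ γ x t, funext hγ₀, hγ⟩

end IntegralCurve

section RealLine

variable {f g : ℝ → ℝ} {r t : ℝ}

lemma antitone_of_isIntegralCurve_neg (hf : ∀ x, 0 ≤ f x)
    (hg : IsIntegralCurve g fun _ x ↦ -f x) : Antitone g :=
  antitone_of_hasDerivAt_nonpos hg fun s ↦ neg_nonpos.2 (hf (g s))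

lemma neg_of_isIntegralCurve_neg_of_lt (hf : ∀ x, 0 ≤ f x) (hf₁ : ∀ x ∈ Icc 0 r, 1 ≤ f x)
    (hg : IsIntegralCurve g fun _ x ↦ -f x) (hg₀ : g 0 ≤ r) (ht : 0 ≤ t) (hrt : r < t) :
    g t < 0 := by
  by_contra! hgt
  have hanti := antitone_of_isIntegralCurve_neg hf hg
  have hmem : ∀ s ∈ Icc 0 t, g s ∈ Icc 0 r := fun s hs ↦
    ⟨hgt.trans (hanti hs.2), (hanti hs.1).trans hg₀⟩
  have hderiv : ∀ s, HasDerivAt (fun s ↦ g s + s) (-f (g s) + 1) s := fun s ↦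
    (hg s).add (hasDerivAt_id s)
  have hanti' : AntitoneOn (fun s ↦ g s + s) (Icc 0 t) :=
    antitoneOn_of_hasDerivWithinAt_nonpos (convex_Icc 0 t)
      (fun s _ ↦ (hderiv s).continuousAt.continuousWithinAt)
      (fun s _ ↦ (hderiv s).hasDerivWithinAt)
      fun s hs ↦ by linarith [hf₁ _ (hmem s (interior_subset hs))]
  have : g t + t ≤ g 0 + 0 := hanti' (left_mem_Icc.2 ht) (right_mem_Icc.2 ht) ht
  linarith

end RealLine

/-- The Hamiltonian vector field of `H` for `ω = dx ∧ dy` on `ℂ = ℝ²`, with the sign convention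
`dH = -ι(X_H) ω`. -/
noncomputable def hamiltonianVectorField (H : ℂ → ℝ) (z : ℂ) : ℂ :=
  Complex.I * ∇ H z

section HamiltonianVectorField

variable {H : ℂ → ℝ}

lemma contDiff_hamiltonianVectorField {n : ℕ∞ω} (hH : ContDiff ℝ (n + 1) H) :
    ContDiff ℝ n (hamiltonianVectorField H) :=
  contDiff_const.mul <|
    (InnerProductSpace.toDual ℝ ℂ).symm.contDiff.comp (hH.fderiv_right le_rfl)

lemma tsupport_hamiltonianVectorField_subset :
    tsupport (hamiltonianVectorField H) ⊆ tsupport H := by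
  refine (closure_mono fun z hz ↦ ?_).trans (tsupport_fderiv_subset ℝ)
  contrapose! hz
  simp_all [hamiltonianVectorField, gradient]

lemma hasCompactSupport_hamiltonianVectorField (hH : HasCompactSupport H) :
    HasCompactSupport (hamiltonianVectorField H) :=
  hH.of_isClosed_subset (isClosed_tsupport _) tsupport_hamiltonianVectorField_subset

lemma exists_hamiltonianFlow_of_hasCompactSupport (hH : ContDiff ℝ 2 H)
    (hc : HasCompactSupport H) :
    ∃ b : ℝ → ℂ → ℂ, b 0 = id ∧
      (∀ z, IsIntegralCurve (b · z) fun _ ↦ hamiltonianVectorField H) ∧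
      ∀ t₀ z, b t₀ z ∉ tsupport H → ∀ t, b t z = b t₀ z := by
  have hv : ContDiff ℝ 1 (hamiltonianVectorField H) := contDiff_hamiltonianVectorField hH
  obtain ⟨b, hb₀, hb⟩ :=
    exists_flow_of_hasCompactSupport hv (hasCompactSupport_hamiltonianVectorField hc)
  refine ⟨b, hb₀, hb, fun t₀ z hz ↦ isIntegralCurve_apply_eq_of_eq_zero hv (hb z) ?_⟩
  exact image_eq_zero_of_notMem_tsupport (mt (tsupport_hamiltonianVectorField_subset ·) hz)

end HamiltonianVectorField

/-- `Im` generates the leftward translations of `ℂ`; this is `Im` cut off by `χ`. -/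
def cutoffIm (χ : ℂ → ℝ) (z : ℂ) : ℝ :=
  χ z * z.im

section CutoffIm

variable {χ : ℂ → ℝ}

lemma contDiff_cutoffIm {n : ℕ∞ω} (hχ : ContDiff ℝ n χ) : ContDiff ℝ n (cutoffIm χ) :=
  hχ.mul Complex.imCLM.contDiff

lemma tsupport_cutoffIm_subset : tsupport (cutoffIm χ) ⊆ tsupport χ :=
  tsupport_mul_subset_left

lemma hasCompactSupport_cutoffIm (hχ : HasCompactSupport χ) : HasCompactSupport (cutoffIm χ) :=
  hχ.mul_right

lemma hamiltonianVectorField_cutoffIm_ofReal {x : ℝ} (hχ : DifferentiableAt ℝ χ x) :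
    hamiltonianVectorField (cutoffIm χ) x = -χ x := by
  have hderiv : HasFDerivAt (cutoffIm χ) (χ x • Complex.imCLM) (x : ℂ) := by
    simpa using! hχ.hasFDerivAt.mul Complex.imCLM.hasFDerivAt
  have hgrad : ∇ (cutoffIm χ) x = χ x * Complex.I := by
    refine HasGradientAt.gradient (hasGradientAt_iff_hasFDerivAt.2 ?_)
    exact hderiv.congr_fderiv (ContinuousLinearMap.ext fun w ↦ by simp [mul_comm])
  rw [hamiltonianVectorField, hgrad, mul_left_comm, Complex.I_mul_I, mul_neg_one]

variable {γ : ℝ → ℂ}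

lemma exists_eq_ofReal_of_isIntegralCurve_cutoffIm (hχ : ContDiff ℝ 2 χ)
    (hc : HasCompactSupport χ)
    (hγ : IsIntegralCurve γ fun _ ↦ hamiltonianVectorField (cutoffIm χ)) {t₀ : ℝ}
    (ht₀ : (γ t₀).im = 0) :
    ∃ g : ℝ → ℝ, (∀ t, γ t = g t) ∧ IsIntegralCurve g fun _ x ↦ -χ x := by
  have hsmooth : ContDiff ℝ 1 fun x : ℝ ↦ -χ x :=
    ((hχ.of_le one_le_two).comp Complex.ofRealCLM.contDiff).neg
  have hcompact : HasCompactSupport fun x : ℝ ↦ -χ x :=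
    (hc.comp_isClosedEmbedding Complex.isometry_ofReal.isClosedEmbedding).comp_left neg_zero
  obtain ⟨g, hgt₀, hg⟩ :=
    exists_isIntegralCurve_of_hasCompactSupport hsmooth hcompact t₀ (γ t₀).re
  have hg' : IsIntegralCurve (fun t ↦ (g t : ℂ))
      fun _ ↦ hamiltonianVectorField (cutoffIm χ) := fun t ↦ by
    simpa [hamiltonianVectorField_cutoffIm_ofReal (hχ.differentiable two_ne_zero _)] using
      (hg t).ofReal_comp
  have heq : γ t₀ = g t₀ := Complex.ext (by simp [hgt₀]) (by simp [ht₀])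
  exact ⟨g, congrFun (isIntegralCurve_eq_of_contDiff
    (contDiff_hamiltonianVectorField (contDiff_cutoffIm hχ)) hγ hg' heq), hg⟩

lemma re_neg_of_isIntegralCurve_cutoffIm (hχ : ContDiff ℝ 2 χ) (hc : HasCompactSupport χ)
    (hχ₀ : ∀ z, 0 ≤ χ z) {r : ℝ} (hχ₁ : ∀ z ∈ closedBall 0 r, 1 ≤ χ z)
    (hγ : IsIntegralCurve γ fun _ ↦ hamiltonianVectorField (cutoffIm χ))
    (hγ₀ : γ 0 ∈ closedBall 0 r) {t : ℝ} (hrt : r < t) (him : (γ t).im = 0) :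
    (γ t).re < 0 := by
  obtain ⟨g, hγg, hg⟩ := exists_eq_ofReal_of_isIntegralCurve_cutoffIm hχ hc hγ him
  have hg₀ : |g 0| ≤ r := by simpa [hγg] using hγ₀
  have hgt : g t < 0 := neg_of_isIntegralCurve_neg_of_lt (fun x ↦ hχ₀ x)
    (fun x hx ↦ hχ₁ x (by simpa [abs_of_nonneg hx.1] using hx.2)) hg (abs_le.1 hg₀).2
    ((abs_nonneg _).trans (hg₀.trans hrt.le)) hrt
  simpa [hγg] using hgt

end CutoffIm

lemma exists_contDiff_cutoff {E : Type*} [NormedAddCommGroup E] [NormedSpace ℝ E]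
    [HasContDiffBump E] [FiniteDimensional ℝ E] (c : E) {r R : ℝ} (hr : 0 < r) (hrR : r < R) :
    ∃ χ : E → ℝ, ContDiff ℝ ∞ χ ∧ HasCompactSupport χ ∧ (∀ x, 0 ≤ χ x) ∧
      (∀ x ∈ closedBall c r, χ x = 1) ∧ tsupport χ ⊆ ball c R := by
  obtain ⟨ρ, hrρ, hρR⟩ := exists_between hrR
  let χ : ContDiffBump c := ⟨r, ρ, hr, hrρ⟩
  exact ⟨χ, χ.contDiff, χ.hasCompactSupport, fun _ ↦ χ.nonneg,
    fun _ ↦ χ.one_of_mem_closedBall, χ.tsupport_eq.trans_subset (closedBall_subset_ball hρR)⟩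

lemma le_sqrt_div_pi {x a : ℝ} (h : π * x ^ 2 ≤ a) : x ≤ √(a / π) :=
  Real.le_sqrt_of_sq_le ((le_div_iff₀' pi_pos).2 h)

lemma pi_mul_sq_lt_iff {x a : ℝ} (hx : 0 ≤ x) : π * x ^ 2 < a ↔ x < √(a / π) := by
  rw [Real.lt_sqrt hx, lt_div_iff₀' pi_pos]

theorem stmt_1_general {a A : ℝ} (ha : 0 < a) (haA : a < A) :
    ∃ (H : ℂ → ℝ) (b : ℝ → ℂ → ℂ),
      ContDiff ℝ ∞ H ∧
      b 0 = id ∧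
      (∀ (z : ℂ) (t : ℝ), HasDerivAt (fun s ↦ b s z) (Complex.I * ∇ H (b t z)) t) ∧
      (∀ (t : ℝ) (z : ℂ), A ≤ π * ‖z‖ ^ 2 → b t z = z) ∧
      (∀ t : ℝ, √(a / π) < t →
        b t '' {z : ℂ | π * ‖z‖ ^ 2 ≤ a} ⊆
          {z : ℂ | π * ‖z‖ ^ 2 < A} \ {z : ℂ | z.im = 0 ∧ 0 ≤ z.re}) := by
  obtain ⟨χ, hχ, hc, hχ₀, hχ₁, hsupp⟩ := exists_contDiff_cutoff (0 : ℂ)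
    (show 0 < √(a / π) by positivity) (show √(a / π) < √(A / π) by gcongr)
  have hχ₂ : ContDiff ℝ 2 χ := hχ.of_le (by norm_cast)
  obtain ⟨b, hb₀, hb, hfix⟩ := exists_hamiltonianFlow_of_hasCompactSupport
    (contDiff_cutoffIm hχ₂) (hasCompactSupport_cutoffIm hc)
  have hout {z : ℂ} (hz : A ≤ π * ‖z‖ ^ 2) : z ∉ tsupport (cutoffIm χ) := fun hmem ↦
    hz.not_gt <| (pi_mul_sq_lt_iff (norm_nonneg z)).2 <|
      mem_ball_zero_iff.1 (hsupp (tsupport_cutoffIm_subset hmem))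
  have hfix₀ (t : ℝ) (z : ℂ) (hz : A ≤ π * ‖z‖ ^ 2) : b t z = z := by
    simpa [hb₀] using hfix 0 z (by simpa [hb₀] using hout hz) t
  refine ⟨cutoffIm χ, b, contDiff_cutoffIm hχ, hb₀, hb, hfix₀, ?_⟩
  rintro t ht _ ⟨z, hz, rfl⟩
  refine ⟨show π * ‖b t z‖ ^ 2 < A from lt_of_not_ge fun hA ↦ ?_, fun ⟨him, hre⟩ ↦ ?_⟩
  · have hzt : z = b t z := by simpa [hb₀] using hfix t z (hout hA) 0
    exact (hz.trans_lt haA).not_ge (hzt ▸ hA)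
  · exact hre.not_gt <| re_neg_of_isIntegralCurve_cutoffIm hχ₂ hc hχ₀
      (fun w hw ↦ (hχ₁ w hw).ge) (hb z) (by simpa [hb₀] using le_sqrt_div_pi hz) ht him

/-- For `0 < ε < 1` there is a smooth time-independent Hamiltonian `H : ℂ → ℝ`
whose Hamiltonian flow `b` (i.e. `b 0 = id` and `∂ₜ b t z = I * ∇H (b t z)`) is the identity
outside the disc `{π|z|² < 1 + ε}` and, for every `t > 1`, carries the closed unit-area disc
into the slit disc `{π|z|² < 1 + ε} \ {Im z = 0 ∧ Re z ≥ 0}`. -/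
theorem stmt_1 (ε : ℝ) (hε0 : 0 < ε) (hε1 : ε < 1) :
    ∃ (H : ℂ → ℝ) (b : ℝ → ℂ → ℂ),
      ContDiff ℝ (⊤ : ℕ∞) H ∧
      b 0 = id ∧
      (∀ (z : ℂ) (t : ℝ),
        HasDerivAt (fun s => b s z) (Complex.I * gradient H (b t z)) t) ∧
      (∀ (t : ℝ) (z : ℂ), 1 + ε ≤ π * ‖z‖ ^ 2 → b t z = z) ∧
      (∀ t : ℝ, 1 < t →
        b t '' {z : ℂ | π * ‖z‖ ^ 2 ≤ 1} ⊆
          {z : ℂ | π * ‖z‖ ^ 2 < 1 + ε} \ {z : ℂ | z.im = 0 ∧ 0 ≤ z.re}) := by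
  obtain ⟨H, b, hH, hb₀, hb, hfix, hslit⟩ := stmt_1_general one_pos (lt_add_of_pos_right 1 hε0)
  have hr : √(1 / π) ≤ 1 :=
    Real.sqrt_le_one.2 (div_le_one_of_le₀ (by linarith [pi_gt_three]) pi_nonneg)
  exact ⟨H, b, hH, hb₀, hb, hfix, fun t ht ↦ hslit t (hr.trans_lt ht)⟩
end

section
/- For every ε with 0 < ε < 1 and every δ with 0 < δ < ε there exist a smooth time-dependent function H : ℝ × ℂ → ℝ and a Hamiltonian flow b : ℝ → ℂ → ℂ of H with b 0 = id such that for every t ≥ 0: (i) b t z = z whenever π|z|² ≥ t + 1 + ε; and (ii) b t maps the set S₀ = {z ∈ ℂ : δ ≤ π|z|² ≤ 1 + ε − δ and the argument of z, measured in [0, 2π), lies in [δ, 2π − δ]} onto the set S_t = {z ∈ ℂ : t + δ ≤ π|z|² ≤ t + 1 + ε − δ and the argument of z, measured in [0, 2π), lies in [δ, 2π − δ]}. -/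
open Real

/-- The argument of a complex number measured in `[0, 2π)`. -/
noncomputable def arg2pi (z : ℂ) : ℝ :=
  if 0 ≤ z.arg then z.arg else z.arg + 2 * π

/-- The region `{t + δ ≤ π|z|² ≤ t + 1 + ε − δ, δ ≤ arg z ≤ 2π − δ}` (argument in `[0,2π)`). -/
def region (ε δ t : ℝ) : Set ℂ :=
  {z : ℂ | t + δ ≤ π * ‖z‖ ^ 2 ∧ π * ‖z‖ ^ 2 ≤ t + 1 + ε - δ ∧
           δ ≤ arg2pi z ∧ arg2pi z ≤ 2 * π - δ}

/-!
With `θ` the angular coordinate, `dx ∧ dy = d(π|z|²) ∧ dθ / 2π`, so the Hamiltonian `-θ / 2π` moves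
points radially, with `π|z|²` growing at unit speed. It is smooth off the nonnegative real axis.
Cutting it off near that axis, near the origin and outside the growing disc `π|z|² < t + 1 + ε`
gives a smooth `H` on `ℝ × ℂ` which still equals `-θ / 2π` near each moving region. Its field is
bounded on bounded time intervals, so it has a global flow. By uniqueness of integral curves this
flow is the explicit radial motion on the initial region, and up to time `t` it fixes every point
outside the disc of time `t`, because the earlier discs are smaller.
-/

open Function Set Filter Metric
open scoped ComplexOrder ContDiff Topology ComplexConjugate NNReal

theorem exists_forall_lipschitzOnWith_pair {α X Y : Type*} [PseudoMetricSpace α]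
    [PseudoMetricSpace X] [PseudoMetricSpace Y] {v : α → X → Y} (hv : LocallyLipschitz (uncurry v))
    {s : Set α} (hs : IsCompact s) {f g : α → X} (hf : ContinuousOn f s) (hg : ContinuousOn g s) :
    ∃ K, ∀ a ∈ s, LipschitzOnWith K (v a) {f a, g a} := by
  have hgraph : ∀ {h : α → X}, ContinuousOn h s → IsCompact ((fun a ↦ (a, h a)) '' s) := fun hh ↦
    hs.image_of_continuousOn (continuousOn_id.prodMk hh)
  obtain ⟨K, hK⟩ := hv.locallyLipschitzOn.exists_lipschitzOnWith_of_compact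
    ((hgraph hf).union (hgraph hg))
  have hmem : ∀ a ∈ s, ∀ x ∈ ({f a, g a} : Set X),
      (a, x) ∈ (fun a ↦ (a, f a)) '' s ∪ (fun a ↦ (a, g a)) '' s := by
    rintro a ha x (rfl | rfl)
    exacts [.inl ⟨a, ha, rfl⟩, .inr ⟨a, ha, rfl⟩]
  refine ⟨K, fun a ha x hx y hy ↦ ?_⟩
  simpa [Prod.edist_eq] using hK (hmem a ha x hx) (hmem a ha y hy)

section IntegralCurve

variable {E : Type*} [NormedAddCommGroup E] [NormedSpace ℝ E] {v : ℝ → E → E}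

theorem eqOn_of_isIntegralCurveOn (hv : LocallyLipschitz (uncurry v)) {s : Set ℝ}
    (hs : s.OrdConnected) {f g : ℝ → E} (hf : IsIntegralCurveOn f v s)
    (hg : IsIntegralCurveOn g v s) {t₀ : ℝ} (ht₀ : t₀ ∈ s) (h : f t₀ = g t₀) : EqOn f g s := by
  intro t ht
  have hsub : uIcc t₀ t ⊆ s := hs.uIcc_subset ht₀ ht
  have hf' := hf.mono hsub
  have hg' := hg.mono hsub
  obtain ⟨K, hK⟩ := exists_forall_lipschitzOnWith_pair hv isCompact_uIcc hf'.continuousOn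
    hg'.continuousOn
  rcases le_total t₀ t with hle | hle
  · rw [uIcc_of_le hle] at hf' hg' hK
    have hright : ∀ {γ : ℝ → E}, IsIntegralCurveOn γ v (Icc t₀ t) →
        ∀ τ ∈ Ico t₀ t, HasDerivWithinAt γ (v τ (γ τ)) (Ici τ) τ := fun hγ τ hτ ↦
      (hγ τ (Ico_subset_Icc_self hτ)).mono_of_mem_nhdsWithin (Icc_mem_nhdsGE_of_mem hτ)
    exact ODE_solution_unique_of_mem_Icc_right
      (fun τ hτ ↦ hK τ (Ico_subset_Icc_self hτ)) hf'.continuousOn (hright hf') (by simp)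
      hg'.continuousOn (hright hg') (by simp) h (right_mem_Icc.2 hle)
  · rw [uIcc_of_ge hle] at hf' hg' hK
    have hleft : ∀ {γ : ℝ → E}, IsIntegralCurveOn γ v (Icc t t₀) →
        ∀ τ ∈ Ioc t t₀, HasDerivWithinAt γ (v τ (γ τ)) (Iic τ) τ := fun hγ τ hτ ↦
      (hγ τ (Ioc_subset_Icc_self hτ)).mono_of_mem_nhdsWithin (Icc_mem_nhdsLE_of_mem hτ)
    exact ODE_solution_unique_of_mem_Icc_left
      (fun τ hτ ↦ hK τ (Ioc_subset_Icc_self hτ)) hf'.continuousOn (hleft hf') (by simp)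
      hg'.continuousOn (hleft hg') (by simp) h (left_mem_Icc.2 hle)

theorem exists_isIntegralCurve_of_forall_Icc (hv : LocallyLipschitz (uncurry v)) {x : E}
    (h : ∀ a > 0, ∃ γ : ℝ → E, γ 0 = x ∧ IsIntegralCurveOn γ v (Icc (-a) a)) :
    ∃ γ : ℝ → E, γ 0 = x ∧ IsIntegralCurve γ v := by
  choose! F hF₀ hF using h
  have hagree : ∀ {a b : ℝ}, 0 < a → a ≤ b → EqOn (F a) (F b) (Icc (-a) a) := fun ha hab ↦
    eqOn_of_isIntegralCurveOn hv ordConnected_Icc (hF _ ha)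
      ((hF _ (ha.trans_le hab)).mono (Icc_subset_Icc (neg_le_neg hab) hab))
      (mem_Icc.2 ⟨by linarith, ha.le⟩) ((hF₀ _ ha).trans (hF₀ _ (ha.trans_le hab)).symm)
  refine ⟨fun t ↦ F (|t| + 1) t, hF₀ _ (by positivity), fun t ↦ ?_⟩
  have hmem : ∀ {s a : ℝ}, |s| < a → Icc (-a) a ∈ 𝓝 s := fun hs ↦
    Icc_mem_nhds (abs_lt.1 hs).1 (abs_lt.1 hs).2
  have hnear : (fun s ↦ F (|s| + 1) s) =ᶠ[𝓝 t] F (|t| + 2) := by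
    filter_upwards [continuous_abs.continuousAt.eventually_lt_const (lt_add_one |t|)] with s hs
    exact hagree (by positivity) (by linarith) (mem_of_mem_nhds (hmem (lt_add_one |s|)))
  have hderiv := (hF (|t| + 2) (by positivity) t (abs_le.1 (by linarith))).hasDerivAt
    (hmem (by linarith))
  rw [← hnear.eq_of_nhds] at hderiv
  exact hderiv.congr_of_eventuallyEq hnear

theorem exists_isIntegralCurve_of_bounded [ProperSpace E] (hv : LocallyLipschitz (uncurry v))
    (hbdd : ∀ T : ℝ, ∃ L : ℝ, ∀ t ∈ Icc (-T) T, ∀ x, ‖v t x‖ ≤ L) (x : E) :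
    ∃ γ : ℝ → E, γ 0 = x ∧ IsIntegralCurve γ v := by
  refine exists_isIntegralCurve_of_forall_Icc hv fun T hT ↦ ?_
  obtain ⟨L, hL⟩ := hbdd T
  have h0 : (0 : ℝ) ∈ Icc (-T) T := ⟨by linarith, hT.le⟩
  lift L to ℝ≥0 using (norm_nonneg _).trans (hL 0 h0 x)
  lift T to ℝ≥0 using hT.le
  obtain ⟨K, hK⟩ := hv.locallyLipschitzOn.exists_lipschitzOnWith_of_compact
    (isCompact_Icc.prod (isCompact_closedBall x (L * T)))
  have hpl : IsPicardLindelof v (⟨0, h0⟩ : Icc (-T : ℝ) T) x (L * T) 0 L K :=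
    { lipschitzOnWith := fun t ht y hy z hz ↦ by
        simpa [Prod.edist_eq] using
          hK (x := (t, y)) (mk_mem_prod ht hy) (y := (t, z)) (mk_mem_prod ht hz)
      continuousOn := fun y _ ↦ (hv.continuous.comp (.prodMk_left y)).continuousOn
      norm_le := fun t ht y _ ↦ hL t ht y
      mul_max_le := by simp }
  exact hpl.exists_eq_forall_mem_Icc_hasDerivWithinAt₀

end IntegralCurve

section Hamiltonian

/-- The time-dependent Hamiltonian vector field `X_F(z) = i ∇F(z)`, with `F = H(t, ·)`, on `ℂ`
with its standard symplectic form `dx ∧ dy`. -/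
noncomputable def hamiltonianField (H : ℝ × ℂ → ℝ) (t : ℝ) (z : ℂ) : ℂ :=
  Complex.I * gradient (fun w ↦ H (t, w)) z

theorem contDiff_uncurry_hamiltonianField {H : ℝ × ℂ → ℝ} {n : ℕ∞ω} (hH : ContDiff ℝ (n + 1) H) :
    ContDiff ℝ n (uncurry (hamiltonianField H)) := by
  have hfderiv : ContDiff ℝ n fun p : ℝ × ℂ ↦ fderiv ℝ (fun w ↦ H (p.1, w)) p.2 :=
    ContDiff.fderiv (f := fun (p : ℝ × ℂ) w ↦ H (p.1, w))
      (hH.comp ((contDiff_fst.comp contDiff_fst).prodMk contDiff_snd)) contDiff_snd le_rfl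
  exact contDiff_const.mul
    ((InnerProductSpace.toDual ℝ ℂ).symm.toContinuousLinearEquiv.contDiff.comp hfderiv)

theorem locallyLipschitz_uncurry_hamiltonianField {H : ℝ × ℂ → ℝ} (hH : ContDiff ℝ 2 H) :
    LocallyLipschitz (uncurry (hamiltonianField H)) :=
  (contDiff_uncurry_hamiltonianField (n := 1) (by rwa [one_add_one_eq_two])).locallyLipschitz

theorem hamiltonianField_congr_of_eventuallyEq {H G : ℝ × ℂ → ℝ} {t : ℝ} {z : ℂ}
    (h : H =ᶠ[𝓝 (t, z)] G) : hamiltonianField H t z = hamiltonianField G t z := by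
  have hslice : (fun w ↦ H (t, w)) =ᶠ[𝓝 z] fun w ↦ G (t, w) :=
    (Continuous.prodMk_right t).continuousAt.eventually h
  simp only [hamiltonianField, gradient, hslice.fderiv_eq]

theorem hamiltonianField_eq_zero_of_notMem_tsupport {H : ℝ × ℂ → ℝ} {t : ℝ} {z : ℂ}
    (h : (t, z) ∉ tsupport H) : hamiltonianField H t z = 0 := by
  rw [hamiltonianField_congr_of_eventuallyEq (notMem_tsupport_iff_eventuallyEq.1 h)]
  simp [hamiltonianField]

theorem isIntegralCurveOn_const_of_notMem_tsupport {H : ℝ × ℂ → ℝ} {s : Set ℝ} {z : ℂ}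
    (h : ∀ t ∈ s, (t, z) ∉ tsupport H) :
    IsIntegralCurveOn (fun _ ↦ z) (hamiltonianField H) s := fun t ht ↦ by
  rw [hamiltonianField_eq_zero_of_notMem_tsupport (h t ht)]
  exact hasDerivWithinAt_const t s z

theorem exists_hamiltonianFlow {H : ℝ × ℂ → ℝ} (hH : ContDiff ℝ 2 H)
    (hsupp : ∀ T : ℝ, ∃ R : ℝ, ∀ t ∈ Icc (-T) T, ∀ z, (t, z) ∈ tsupport H → ‖z‖ ≤ R) :
    ∃ b : ℝ → ℂ → ℂ, b 0 = id ∧ ∀ z, IsIntegralCurve (b · z) (hamiltonianField H) := by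
  have hX := locallyLipschitz_uncurry_hamiltonianField hH
  have hbdd : ∀ T : ℝ, ∃ L : ℝ, ∀ t ∈ Icc (-T) T, ∀ z, ‖hamiltonianField H t z‖ ≤ L := by
    intro T
    obtain ⟨R, hR⟩ := hsupp T
    obtain ⟨L, hL⟩ := (isCompact_Icc.prod (isCompact_closedBall (0 : ℂ) R))
      |>.exists_bound_of_continuousOn (s := Icc (-T) T ×ˢ _) hX.continuous.continuousOn
    refine ⟨max L 0, fun t ht z ↦ ?_⟩
    by_cases hz : (t, z) ∈ tsupport H
    · exact le_max_of_le_left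
        (hL (t, z) ⟨ht, mem_closedBall_zero_iff.2 (hR t ht z hz)⟩)
    · simp [hamiltonianField_eq_zero_of_notMem_tsupport hz]
  choose γ hγ₀ hγ using exists_isIntegralCurve_of_bounded hX hbdd
  exact ⟨fun t z ↦ γ z t, funext hγ₀, hγ⟩

end Hamiltonian

theorem exists_contDiff_eventuallyEq_nhdsSet_tsupport_subset {E F : Type*} [NormedAddCommGroup E]
    [NormedSpace ℝ E] [FiniteDimensional ℝ E] [NormedAddCommGroup F] [NormedSpace ℝ F]
    {K U : Set E} (hK : IsClosed K) (hU : IsOpen U) (hKU : K ⊆ U) {G : E → F}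
    {n : ℕ∞} (hG : ContDiffOn ℝ n G U) :
    ∃ H : E → F, ContDiff ℝ n H ∧ H =ᶠ[𝓝ˢ K] G ∧ tsupport H ⊆ U := by
  obtain ⟨W, hW, hKW, hWU⟩ := normal_exists_closure_subset hK hU hKU
  obtain ⟨χ, hχ1, hχ0, -⟩ := exists_contMDiffMap_one_nhds_of_subset_interior (n := n)
    (modelWithCornersSelf ℝ E) hK (hKW.trans hW.subset_interior_closure)
  have hsupp : tsupport (fun x ↦ χ x • G x) ⊆ U :=
    (tsupport_smul_subset_left χ G).trans <|
      (closure_minimal (fun x hx ↦ not_imp_comm.1 (hχ0 x) hx) isClosed_closure).trans hWU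
  refine ⟨fun x ↦ χ x • G x, ?_, ?_, hsupp⟩
  · refine contDiff_iff_contDiffAt.2 fun x ↦ ?_
    by_cases hx : x ∈ U
    · exact χ.contMDiff.contDiff.contDiffAt.smul (hG.contDiffAt (hU.mem_nhds hx))
    · exact contDiffAt_const.congr_of_eventuallyEq
        (notMem_tsupport_iff_eventuallyEq.1 fun h ↦ hx (hsupp h))
  · filter_upwards [hχ1] with x hx
    rw [hx, one_smul]

section AngleHamiltonian

theorem neg_mem_slitPlane_iff_re_ne_norm {z : ℂ} : -z ∈ Complex.slitPlane ↔ z.re ≠ ‖z‖ := by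
  rw [Complex.mem_slitPlane_iff_not_le_zero, neg_nonpos, ne_eq, Complex.re_eq_norm]

theorem hasGradientAt_arg {z : ℂ} (hz : z ∈ Complex.slitPlane) :
    HasGradientAt Complex.arg (Complex.I * conj z⁻¹) z := by
  have hlog : HasFDerivAt (fun w ↦ (Complex.log w).im)
      (Complex.imCLM ∘L ((ContinuousLinearMap.toSpanSingleton ℂ z⁻¹).restrictScalars ℝ)) z :=
    Complex.imCLM.hasFDerivAt.comp z ((Complex.hasDerivAt_log hz).hasFDerivAt.restrictScalars ℝ)
  simp only [Complex.log_im] at hlog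
  refine hasGradientAt_iff_hasFDerivAt.2 (hlog.congr_fderiv (ContinuousLinearMap.ext fun v ↦ ?_))
  change (v * z⁻¹).im = inner ℝ (Complex.I * conj z⁻¹) v
  rw [Complex.inner, map_mul, Complex.conj_conj, Complex.conj_I, neg_mul, mul_neg, mul_left_comm,
    Complex.neg_re, Complex.I_mul_re, neg_neg]

/-- The autonomous Hamiltonian `-θ / 2π`, up to an additive constant, where `θ ∈ (0, 2π)` is the
angular coordinate off the nonnegative real axis: there `arg (-z) = θ - π`. It generates the radial
motion along which `π|z|²` grows at unit speed. -/
noncomputable def angleHamiltonian (p : ℝ × ℂ) : ℝ :=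
  -(2 * π)⁻¹ * Complex.arg (-p.2)

theorem hamiltonianField_angleHamiltonian (t : ℝ) {z : ℂ} (hz : -z ∈ Complex.slitPlane) :
    hamiltonianField angleHamiltonian t z = ((2 * π)⁻¹ : ℝ) * conj z⁻¹ := by
  have hgrad : HasGradientAt (fun w ↦ angleHamiltonian (t, w))
      (-(2 * π)⁻¹ • (Complex.I * conj z⁻¹)) z := by
    refine hasGradientAt_iff_hasFDerivAt.2 ((((hasGradientAt_arg hz).hasFDerivAt.comp z
      (hasFDerivAt_id z).neg).const_mul (-(2 * π)⁻¹)).congr_fderiv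
      (ContinuousLinearMap.ext fun v ↦ ?_))
    change -(2 * π)⁻¹ * inner ℝ (Complex.I * conj (-z)⁻¹) (-v) =
      inner ℝ (-(2 * π)⁻¹ • (Complex.I * conj z⁻¹)) v
    rw [inv_neg, map_neg, mul_neg, inner_neg_neg, real_inner_smul_left]
  rw [hamiltonianField, hgrad.gradient, Complex.real_smul, Complex.ofReal_neg]
  linear_combination (-((2 * π)⁻¹ : ℝ) * conj z⁻¹ : ℂ) * Complex.I_mul_I

theorem contDiffOn_angleHamiltonian {n : ℕ∞ω} :
    ContDiffOn ℝ n angleHamiltonian {p | -p.2 ∈ Complex.slitPlane} := fun p hp ↦ by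
  have hlog : ContDiffAt ℝ n Complex.log (-p.2) := (Complex.contDiffAt_log hp).restrict_scalars ℝ
  have harg : ContDiffAt ℝ n (fun q : ℝ × ℂ ↦ (Complex.log (-q.2)).im) p :=
    Complex.imCLM.contDiff.contDiffAt.comp p (hlog.comp p contDiffAt_snd.neg)
  simp only [Complex.log_im] at harg
  exact (contDiffAt_const.mul harg).contDiffWithinAt

theorem exists_contDiff_eventuallyEq_angleHamiltonian {a c R R' : ℝ} (ha : 0 < a) (hc : c < 1)
    (hR : R < R') :
    ∃ H : ℝ × ℂ → ℝ, ContDiff ℝ ∞ H ∧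
      (∀ t z, a ≤ π * ‖z‖ ^ 2 → π * ‖z‖ ^ 2 ≤ t + R → z.re ≤ c * ‖z‖ →
        H =ᶠ[𝓝 (t, z)] angleHamiltonian) ∧
      ∀ t z, (t, z) ∈ tsupport H → π * ‖z‖ ^ 2 < t + R' := by
  let K : Set (ℝ × ℂ) :=
    {p | a ≤ π * ‖p.2‖ ^ 2} ∩ {p | π * ‖p.2‖ ^ 2 ≤ p.1 + R} ∩ {p | p.2.re ≤ c * ‖p.2‖}
  let U : Set (ℝ × ℂ) := {p | -p.2 ∈ Complex.slitPlane} ∩ {p | π * ‖p.2‖ ^ 2 < p.1 + R'}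
  have hK : IsClosed K :=
    ((isClosed_le (by fun_prop) (by fun_prop)).inter
      (isClosed_le (by fun_prop) (by fun_prop))).inter
      (isClosed_le (Complex.continuous_re.comp continuous_snd) (by fun_prop))
  have hU : IsOpen U :=
    (Complex.isOpen_slitPlane.preimage (by fun_prop)).inter
      (isOpen_lt (by fun_prop) (by fun_prop))
  have hKU : K ⊆ U := by
    rintro ⟨t, z⟩ ⟨⟨hza : a ≤ π * ‖z‖ ^ 2, hzR : π * ‖z‖ ^ 2 ≤ t + R⟩, hzc : z.re ≤ c * ‖z‖⟩
    have hz : z ≠ 0 := by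
      rintro rfl
      simpa using ha.trans_le hza
    have hre : z.re < ‖z‖ := hzc.trans_lt (mul_lt_of_lt_one_left (norm_pos_iff.2 hz) hc)
    exact ⟨neg_mem_slitPlane_iff_re_ne_norm.2 hre.ne, hzR.trans_lt (by linarith)⟩
  obtain ⟨H, hH, hHK, hHU⟩ := exists_contDiff_eventuallyEq_nhdsSet_tsupport_subset hK hU hKU
    (n := ⊤) (contDiffOn_angleHamiltonian.mono inter_subset_left)
  exact ⟨H, hH, fun t z h₁ h₂ h₃ ↦ eventually_nhdsSet_iff_forall.1 hHK (t, z) ⟨⟨h₁, h₂⟩, h₃⟩,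
    fun t z h ↦ (hHU h).2⟩

end AngleHamiltonian

section AreaShift

/-- The radial rescaling of `ℂ` that adds `s` to the area `π|z|²` of the disc through `z`. It is
meaningful where `0 ≤ π|z|² + s`; elsewhere the square root is `0`. -/
noncomputable def areaShift (s : ℝ) (z : ℂ) : ℂ :=
  √(1 + s / (π * ‖z‖ ^ 2)) * z

@[simp]
theorem areaShift_zero (z : ℂ) : areaShift 0 z = z := by
  simp [areaShift]

variable {s t : ℝ} {z : ℂ}

theorem one_add_div_pi_mul_norm_sq_pos (hz : z ≠ 0) (hs : 0 < π * ‖z‖ ^ 2 + s) :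
    0 < 1 + s / (π * ‖z‖ ^ 2) := by
  have : 0 < π * ‖z‖ ^ 2 := by positivity
  rw [one_add_div this.ne']
  positivity

theorem pi_mul_norm_areaShift_sq (hz : z ≠ 0) (hs : 0 < π * ‖z‖ ^ 2 + s) :
    π * ‖areaShift s z‖ ^ 2 = π * ‖z‖ ^ 2 + s := by
  rw [areaShift, norm_mul, mul_pow, Complex.norm_real, Real.norm_of_nonneg (Real.sqrt_nonneg _),
    Real.sq_sqrt (one_add_div_pi_mul_norm_sq_pos hz hs).le]
  field_simp

theorem areaShift_areaShift (hz : z ≠ 0) (hs : 0 < π * ‖z‖ ^ 2 + s) :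
    areaShift t (areaShift s z) = areaShift (s + t) z := by
  have hscale : (1 + t / (π * ‖z‖ ^ 2 + s)) * (1 + s / (π * ‖z‖ ^ 2))
      = 1 + (s + t) / (π * ‖z‖ ^ 2) := by
    field_simp
    ring
  rw [areaShift, pi_mul_norm_areaShift_sq hz hs, areaShift, ← mul_assoc, ← Complex.ofReal_mul,
    ← Real.sqrt_mul' _ (one_add_div_pi_mul_norm_sq_pos hz hs).le, hscale, areaShift]

theorem hasDerivAt_areaShift (hz : z ≠ 0) (hs : 0 < π * ‖z‖ ^ 2 + s) :
    HasDerivAt (areaShift · z) (((2 * π)⁻¹ : ℝ) * conj (areaShift s z)⁻¹) s := by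
  have hsqrt : HasDerivAt (fun s ↦ √(1 + s / (π * ‖z‖ ^ 2)))
      (1 / (π * ‖z‖ ^ 2) / (2 * √(1 + s / (π * ‖z‖ ^ 2)))) s :=
    (((hasDerivAt_id s).div_const _).const_add 1).sqrt (one_add_div_pi_mul_norm_sq_pos hz hs).ne'
  refine (hsqrt.ofReal_comp.mul_const z).congr_deriv ?_
  have hinv : conj z⁻¹ = z / (‖z‖ : ℂ) ^ 2 := by
    rw [Complex.inv_def, map_mul, Complex.conj_conj, Complex.conj_ofReal,
      Complex.normSq_eq_norm_sq, Complex.ofReal_inv, Complex.ofReal_pow, div_eq_mul_inv]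
  rw [areaShift, mul_inv (√(1 + s / (π * ‖z‖ ^ 2)) : ℂ), map_mul, hinv, ← Complex.ofReal_inv,
    Complex.conj_ofReal]
  push_cast
  field_simp

theorem isIntegralCurveOn_areaShift {H : ℝ × ℂ → ℝ} {S : Set ℝ} (hz : -z ∈ Complex.slitPlane)
    (hS : ∀ s ∈ S, 0 < π * ‖z‖ ^ 2 + s)
    (hH : ∀ s ∈ S, H =ᶠ[𝓝 (s, areaShift s z)] angleHamiltonian) :
    IsIntegralCurveOn (areaShift · z) (hamiltonianField H) S := by
  intro s hs
  have hz₀ : z ≠ 0 := by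
    rintro rfl
    simp at hz
  have hslit : -areaShift s z ∈ Complex.slitPlane := by
    have hscale := Real.sqrt_pos.2 (one_add_div_pi_mul_norm_sq_pos hz₀ (hS s hs))
    rw [neg_mem_slitPlane_iff_re_ne_norm] at hz ⊢
    rwa [areaShift, Complex.re_ofReal_mul, norm_mul, Complex.norm_of_nonneg hscale.le, ne_eq,
      mul_right_inj' hscale.ne']
  rw [hamiltonianField_congr_of_eventuallyEq (hH s hs), hamiltonianField_angleHamiltonian s hslit]
  exact (hasDerivAt_areaShift hz₀ (hS s hs)).hasDerivWithinAt

end AreaShift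

section Region

variable {ε δ t : ℝ} {z : ℂ}

theorem re_le_cos_mul_norm_of_le_arg2pi {θ : ℝ} (hθ : 0 ≤ θ) (h₁ : θ ≤ arg2pi z)
    (h₂ : arg2pi z ≤ 2 * π - θ) : z.re ≤ Real.cos θ * ‖z‖ := by
  have hcos : Real.cos (arg2pi z) ≤ Real.cos θ := by
    rcases le_total (arg2pi z) π with h | h
    · exact Real.cos_le_cos_of_nonneg_of_le_pi hθ h h₁
    · rw [← Real.cos_two_pi_sub]
      exact Real.cos_le_cos_of_nonneg_of_le_pi hθ (by linarith) (by linarith)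
  have hre : ‖z‖ * Real.cos (arg2pi z) = z.re := by
    unfold arg2pi
    split_ifs <;> simp
  rw [← hre, mul_comm]
  gcongr

theorem arg2pi_real_mul {r : ℝ} (hr : 0 < r) (z : ℂ) : arg2pi (r * z) = arg2pi z := by
  rw [arg2pi, Complex.arg_real_mul z hr, ← arg2pi]

theorem ne_zero_of_mem_region (ht : 0 < t + δ) (hz : z ∈ region ε δ t) : z ≠ 0 := by
  rintro rfl
  simpa using ht.trans_le hz.1

theorem areaShift_mem_region {s : ℝ} (ht : 0 < t + δ) (hs : 0 < t + s + δ)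
    (hz : z ∈ region ε δ t) : areaShift s z ∈ region ε δ (t + s) := by
  have hz₀ := ne_zero_of_mem_region ht hz
  obtain ⟨h₁, h₂, harg⟩ := hz
  have hpos : 0 < π * ‖z‖ ^ 2 + s := by linarith
  rw [region, mem_ofPred_eq, pi_mul_norm_areaShift_sq hz₀ hpos, areaShift,
    arg2pi_real_mul (Real.sqrt_pos.2 (one_add_div_pi_mul_norm_sq_pos hz₀ hpos))]
  exact ⟨by linarith, by linarith, harg⟩

theorem image_areaShift_region {s : ℝ} (ht : 0 < t + δ) (hs : 0 < t + s + δ) :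
    areaShift s '' region ε δ t = region ε δ (t + s) := by
  refine Subset.antisymm (image_subset_iff.2 fun z hz ↦ areaShift_mem_region ht hs hz)
    fun w hw ↦ ?_
  have hback : areaShift (-s) w ∈ region ε δ t := by
    simpa using areaShift_mem_region (s := -s) hs (by simpa using ht) hw
  refine ⟨_, hback, ?_⟩
  rw [areaShift_areaShift (ne_zero_of_mem_region hs hw) (by linarith [hw.1]), neg_add_cancel,
    areaShift_zero]

theorem cos_min_pi_lt_one (hδ : 0 < δ) : Real.cos (min δ π) < 1 := by
  simpa using Real.cos_lt_cos_of_nonneg_of_le_pi le_rfl (min_le_right δ π) (lt_min hδ pi_pos)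

theorem re_le_cos_min_mul_norm_of_mem_region (hδ : 0 ≤ δ) (hz : z ∈ region ε δ t) :
    z.re ≤ Real.cos (min δ π) * ‖z‖ :=
  re_le_cos_mul_norm_of_le_arg2pi (le_min hδ pi_nonneg) ((min_le_left δ π).trans hz.2.2.1)
    (hz.2.2.2.trans (sub_le_sub_left (min_le_left δ π) _))

theorem neg_mem_slitPlane_of_mem_region (hδ : 0 < δ) (ht : 0 < t + δ) (hz : z ∈ region ε δ t) :
    -z ∈ Complex.slitPlane := by
  have hnorm : 0 < ‖z‖ := norm_pos_iff.2 (ne_zero_of_mem_region ht hz)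
  have hre : z.re < ‖z‖ := (re_le_cos_min_mul_norm_of_mem_region hδ.le hz).trans_lt
    (mul_lt_of_lt_one_left hnorm (cos_min_pi_lt_one hδ))
  exact neg_mem_slitPlane_iff_re_ne_norm.2 hre.ne

theorem exists_contDiff_eventuallyEq_angleHamiltonian_of_mem_region (ε : ℝ) (hδ : 0 < δ) :
    ∃ H : ℝ × ℂ → ℝ, ContDiff ℝ ∞ H ∧
      (∀ t ≥ 0, ∀ z ∈ region ε δ t, H =ᶠ[𝓝 (t, z)] angleHamiltonian) ∧
      ∀ t z, (t, z) ∈ tsupport H → π * ‖z‖ ^ 2 < t + (1 + ε) := by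
  obtain ⟨H, hH, hangle, hsupp⟩ := exists_contDiff_eventuallyEq_angleHamiltonian hδ
    (cos_min_pi_lt_one hδ) (sub_lt_self (1 + ε) hδ)
  exact ⟨H, hH, fun t ht z hz ↦ hangle t z (by linarith [hz.1]) (by linarith [hz.2.1])
    (re_le_cos_min_mul_norm_of_mem_region hδ.le hz), hsupp⟩

theorem isIntegralCurveOn_areaShift_of_mem_region {H : ℝ × ℂ → ℝ}
    (hH : ∀ t ≥ 0, ∀ z ∈ region ε δ t, H =ᶠ[𝓝 (t, z)] angleHamiltonian) (hδ : 0 < δ)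
    (hz : z ∈ region ε δ 0) :
    IsIntegralCurveOn (areaShift · z) (hamiltonianField H) (Ici 0) := by
  refine isIntegralCurveOn_areaShift (neg_mem_slitPlane_of_mem_region hδ (by simpa) hz)
    (fun s (hs : 0 ≤ s) ↦ by linarith [hz.1]) fun s (hs : 0 ≤ s) ↦ hH s hs _ ?_
  simpa using areaShift_mem_region (s := s) (by simpa) (by linarith) hz

end Region

theorem norm_le_pi_mul_norm_sq_add_one {E : Type*} [SeminormedAddCommGroup E] (x : E) :
    ‖x‖ ≤ π * ‖x‖ ^ 2 + 1 := by
  nlinarith [pi_gt_three, sq_nonneg (‖x‖ - 1), sq_nonneg ‖x‖]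

theorem stmt_2_general (ε δ : ℝ) (hδ0 : 0 < δ) :
    ∃ (H : ℝ × ℂ → ℝ) (b : ℝ → ℂ → ℂ),
      ContDiff ℝ (⊤ : ℕ∞) H ∧
      b 0 = id ∧
      (∀ (z : ℂ) (t : ℝ),
        HasDerivAt (fun s => b s z) (Complex.I * gradient (fun w => H (t, w)) (b t z)) t) ∧
      (∀ t : ℝ, 0 ≤ t →
        (∀ z : ℂ, t + 1 + ε ≤ π * ‖z‖ ^ 2 → b t z = z) ∧
        b t '' region ε δ 0 = region ε δ t) := by
  obtain ⟨H, hH, hangle, hsupp⟩ :=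
    exists_contDiff_eventuallyEq_angleHamiltonian_of_mem_region ε hδ0
  have hH2 : ContDiff ℝ 2 H := contDiff_infty.1 hH 2
  obtain ⟨b, hb₀, hb⟩ := exists_hamiltonianFlow hH2 fun T ↦
    ⟨T + 2 + ε, fun t ht z hz ↦ by linarith [hsupp t z hz, ht.2, norm_le_pi_mul_norm_sq_add_one z]⟩
  refine ⟨H, b, hH, hb₀, hb, fun t ht ↦ ?_⟩
  have hflow : ∀ {z : ℂ} {γ : ℝ → ℂ}, γ 0 = z →
      IsIntegralCurveOn γ (hamiltonianField H) (Icc 0 t) → b t z = γ t := fun hγ₀ hγ ↦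
    eqOn_of_isIntegralCurveOn (locallyLipschitz_uncurry_hamiltonianField hH2) ordConnected_Icc
      ((hb _).isIntegralCurveOn _) hγ (left_mem_Icc.2 ht) (by rw [hb₀, hγ₀, id])
      (right_mem_Icc.2 ht)
  refine ⟨fun z hz ↦ hflow (γ := fun _ ↦ z) rfl <| isIntegralCurveOn_const_of_notMem_tsupport
    fun s hs hmem ↦ by linarith [hsupp s z hmem, hs.2], ?_⟩
  have hshift : EqOn (b t) (areaShift t) (region ε δ 0) := fun z hz ↦
    hflow (areaShift_zero z)
      ((isIntegralCurveOn_areaShift_of_mem_region hangle hδ0 hz).mono Icc_subset_Ici_self)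
  rw [hshift.image_eq, image_areaShift_region (by simpa) (by linarith), zero_add]

/-- For `0 < ε < 1` and `0 < δ < ε` there are a smooth time-dependent Hamiltonian
`H : ℝ × ℂ → ℝ` and a Hamiltonian flow `b` of `H` such that for all `t ≥ 0`: `b t` is the
identity on `{π|z|² ≥ t + 1 + ε}`, and `b t` maps `region ε δ 0` onto `region ε δ t`. -/
theorem stmt_2 (ε δ : ℝ) (hε0 : 0 < ε) (hε1 : ε < 1) (hδ0 : 0 < δ) (hδε : δ < ε) :
    ∃ (H : ℝ × ℂ → ℝ) (b : ℝ → ℂ → ℂ),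
      ContDiff ℝ (⊤ : ℕ∞) H ∧
      b 0 = id ∧
      (∀ (z : ℂ) (t : ℝ),
        HasDerivAt (fun s => b s z) (Complex.I * gradient (fun w => H (t, w)) (b t z)) t) ∧
      (∀ t : ℝ, 0 ≤ t →
        (∀ z : ℂ, t + 1 + ε ≤ π * ‖z‖ ^ 2 → b t z = z) ∧
        b t '' region ε δ 0 = region ε δ t) :=
  stmt_2_general ε δ hδ0
end
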